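/- Let p ≥ 5 and let B_{2p+2} be the braid group with Artin generators σ_1,…,σ_{2p+1}. Then σ_1^{−1}·(∏_{i=4}^{p−1} (σ_3σ_4⋯σ_{2(p−i)+2})(σ_1σ_2⋯σ_{2(p−i)+1}))·σ_1 = (σ_3σ_5σ_7⋯σ_{2p−7})·σ_1^{−1}·(∏_{i=4}^{p−1} (σ_4σ_5⋯σ_{2(p−i)+2})(σ_1σ_2⋯σ_{2(p−i)+1}))·σ_1, where both products over i are taken in increasing order of i, and for i = p−1 the block (σ_4⋯σ_{2(p−i)+2}) is the single generator σ_4. -/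

import Mathlib

/-- The Artin braid relations on `m` generators (generator `i : Fin m`
    represents the Artin generator `σ_{i+1}`). -/
def braidRels (m : ℕ) : Set (FreeGroup (Fin m)) :=
  {r | (∃ i j : Fin m, (i : ℕ) + 2 ≤ (j : ℕ) ∧
        r = FreeGroup.of i * FreeGroup.of j * (FreeGroup.of i)⁻¹ * (FreeGroup.of j)⁻¹) ∨
      (∃ i j : Fin m, (j : ℕ) = (i : ℕ) + 1 ∧
        r = FreeGroup.of i * FreeGroup.of j * FreeGroup.of i *
            (FreeGroup.of j * FreeGroup.of i * FreeGroup.of j)⁻¹)}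

/-- The braid group on `n` strands, presented by the Artin generators
    `σ_1, …, σ_{n-1}` and the braid relations. -/
def BraidGroup (n : ℕ) : Type := PresentedGroup (braidRels (n - 1))

instance (n : ℕ) : Group (BraidGroup n) :=
  inferInstanceAs (Group (PresentedGroup (braidRels (n - 1))))

/-- The Artin generator `σ_i` of `BraidGroup n` (1-based: `1 ≤ i ≤ n-1`);
    out-of-range indices give the identity. -/
def σ (n i : ℕ) : BraidGroup n :=
  if h : 1 ≤ i ∧ i ≤ n - 1 then
    (PresentedGroup.of ⟨i - 1, by omega⟩ : PresentedGroup (braidRels (n - 1)))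
  else 1

/-- The ascending product of generators `σ_a σ_{a+1} ⋯ σ_b` in `B_n`. -/
def asc (n a b : ℕ) : BraidGroup n :=
  ((List.range (b + 1 - a)).map (fun t => σ n (a + t))).prod

/-!
A generator `σ_j` with `a ≤ j < b` moves from right to left past the ascending product `σ_a ⋯ σ_b`
at the cost of becoming `σ_{j+1}`, by a single braid relation. Hence it moves past the block
`(σ_4 ⋯ σ_{2k+2})(σ_1 ⋯ σ_{2k+1})`, for `3 ≤ j ≤ 2k`, at the cost of becoming `σ_{j+2}`. Split off
the leading `σ_3` of every block on the left-hand side: moving the one of block `t` (counted from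
`0`) past the `t` blocks before it turns it into `σ_{3+2t}`. These odd generators commute with
`σ_1`.
-/

section SemiconjBy

variable {M : Type*} [Monoid M] {s f : ℕ → M} {m : ℕ}

theorem semiconjBy_prod_map_range
    (h : ∀ t j, t + j + 1 = m → SemiconjBy (f t) (s j) (s (j + 1))) :
    SemiconjBy ((List.range m).map f).prod (s 0) (s m) := by
  induction m generalizing s with
  | zero => simp
  | succ m ih =>
    rw [List.prod_range_succ]
    have last : SemiconjBy (f m) (s 0) (s 1) := h m 0 rfl
    have initial : SemiconjBy ((List.range m).map f).prod (s 1) (s (m + 1)) :=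
      ih (s := fun j => s (j + 1)) fun t j htj => h t (j + 1) (by omega)
    exact initial.mul_left last

theorem prod_map_range_mul_of_semiconjBy
    (h : ∀ t j, t + j + 1 < m → SemiconjBy (f t) (s j) (s (j + 1))) :
    ((List.range m).map fun t => s 0 * f t).prod =
      ((List.range m).map s).prod * ((List.range m).map f).prod := by
  induction m with
  | zero => simp
  | succ m ih =>
    have move : SemiconjBy ((List.range m).map f).prod (s 0) (s m) :=
      semiconjBy_prod_map_range fun t j htj => h t j (by omega)
    calc ((List.range (m + 1)).map fun t => s 0 * f t).prod
      _ = ((List.range m).map s).prod * ((List.range m).map f).prod * (s 0 * f m) := by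
        rw [List.prod_range_succ, ih fun t j htj => h t j (by omega)]
      _ = ((List.range m).map s).prod * (((List.range m).map f).prod * s 0) * f m := by
        simp only [mul_assoc]
      _ = ((List.range m).map s).prod * (s m * ((List.range m).map f).prod) * f m := by
        rw [move.eq]
      _ = ((List.range (m + 1)).map s).prod * ((List.range (m + 1)).map f).prod := by
        simp only [List.prod_range_succ, mul_assoc]

end SemiconjBy

section Generators

variable {n i j : ℕ}

theorem σ_of_mem (h : 1 ≤ i ∧ i ≤ n - 1) :
    σ n i = PresentedGroup.mk (braidRels (n - 1)) (FreeGroup.of ⟨i - 1, by omega⟩) :=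
  dif_pos h

theorem σ_of_notMem (h : ¬(1 ≤ i ∧ i ≤ n - 1)) : σ n i = 1 :=
  dif_neg h

theorem commute_σ (h : i + 2 ≤ j) : Commute (σ n i) (σ n j) := by
  by_cases hi : 1 ≤ i ∧ i ≤ n - 1
  · by_cases hj : 1 ≤ j ∧ j ≤ n - 1
    · rw [σ_of_mem hi, σ_of_mem hj]
      refine PresentedGroup.mk_eq_mk_of_mul_inv_mem
        (Or.inl ⟨⟨i - 1, by omega⟩, ⟨j - 1, by omega⟩, ?_, ?_⟩)
      · change i - 1 + 2 ≤ j - 1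
        omega
      · simp only [mul_inv_rev, mul_assoc]
    · rw [σ_of_notMem hj]
      exact Commute.one_right _
  · rw [σ_of_notMem hi]
    exact Commute.one_left _

theorem σ_mul_σ_mul_σ (hi : 1 ≤ i) (hn : i + 1 < n) :
    σ n i * σ n (i + 1) * σ n i = σ n (i + 1) * σ n i * σ n (i + 1) := by
  rw [σ_of_mem (i := i) (by omega), σ_of_mem (i := i + 1) (by omega)]
  refine PresentedGroup.mk_eq_mk_of_mul_inv_mem (Or.inr ⟨⟨i - 1, by omega⟩, ⟨i, by omega⟩, ?_, rfl⟩)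
  exact (Nat.sub_add_cancel hi).symm

theorem semiconjBy_σ_mul_σ (hi : 1 ≤ i) (hn : i + 1 < n) :
    SemiconjBy (σ n i * σ n (i + 1)) (σ n i) (σ n (i + 1)) :=
  (σ_mul_σ_mul_σ hi hn).trans (mul_assoc _ _ _)

end Generators

section AscendingProducts

variable {n a b c d j : ℕ}

theorem asc_eq_prod_range' (n a b : ℕ) :
    asc n a b = ((List.range' a (b + 1 - a)).map (σ n)).prod := by
  rw [List.range'_eq_map_range, List.map_map]
  rfl

theorem asc_mul_asc (hab : a ≤ b + 1) (hbc : b ≤ c) :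
    asc n a b * asc n (b + 1) c = asc n a c := by
  have split : List.range' a (b + 1 - a) ++ List.range' (b + 1) (c + 1 - (b + 1)) =
      List.range' a (c + 1 - a) := by
    convert List.range'_append_1 (s := a) (m := b + 1 - a) (n := c + 1 - (b + 1)) using 3 <;> omega
  simp only [asc_eq_prod_range', ← List.prod_append, ← List.map_append, split]

theorem asc_self (n a : ℕ) : asc n a a = σ n a := by
  simp [asc]

theorem σ_mul_asc (hab : a ≤ b) : σ n a * asc n (a + 1) b = asc n a b := by
  rw [← asc_self, asc_mul_asc a.le_succ hab]

theorem commute_asc_σ (h : b + 2 ≤ j ∨ j + 2 ≤ a) : Commute (asc n a b) (σ n j) := by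
  rw [asc_eq_prod_range']
  refine Commute.list_prod_left _ _ fun x hx => ?_
  obtain ⟨i, hi, rfl⟩ := List.mem_map.mp hx
  rw [List.mem_range'_1] at hi
  rcases h with h | h
  · exact commute_σ (by omega)
  · exact (commute_σ (by omega)).symm

theorem semiconjBy_asc (hj : 1 ≤ j) (haj : a ≤ j) (hjb : j < b) (hn : j + 1 < n) :
    SemiconjBy (asc n a b) (σ n j) (σ n (j + 1)) := by
  obtain ⟨i, rfl⟩ := Nat.exists_eq_add_of_le' hj
  have split : asc n a i * (σ n (i + 1) * σ n (i + 2)) * asc n (i + 3) b = asc n a b := by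
    rw [mul_assoc, mul_assoc, σ_mul_asc hjb, σ_mul_asc hjb.le, asc_mul_asc haj (by omega)]
  rw [← split]
  have left : Commute (asc n a i) (σ n (i + 2)) := commute_asc_σ (Or.inl le_rfl)
  have right : Commute (asc n (i + 3) b) (σ n (i + 1)) := commute_asc_σ (Or.inr le_rfl)
  exact (left.semiconjBy.mul_left (semiconjBy_σ_mul_σ hj hn)).mul_left right.semiconjBy

theorem semiconjBy_asc_mul_asc (hj : 1 ≤ j) (haj : a ≤ j + 1) (hjb : j + 1 < b) (hcj : c ≤ j)
    (hjd : j < d) (hn : j + 2 < n) :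
    SemiconjBy (asc n a b * asc n c d) (σ n j) (σ n (j + 2)) :=
  (semiconjBy_asc (by omega) haj hjb hn).mul_left (semiconjBy_asc hj hcj hjd (by omega))

end AscendingProducts

theorem prod_asc_three_mul_asc_one {n m : ℕ} (hn : 2 * m + 3 ≤ n) :
    ((List.range m).map fun t =>
      asc n 3 (2 * (m - t) + 2) * asc n 1 (2 * (m - t) + 1)).prod =
    ((List.range m).map fun t => σ n (3 + 2 * t)).prod *
      ((List.range m).map fun t =>
        asc n 4 (2 * (m - t) + 2) * asc n 1 (2 * (m - t) + 1)).prod := by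
  have shift_odd (t j : ℕ) (htj : t + j + 1 < m) :
      SemiconjBy (asc n 4 (2 * (m - t) + 2) * asc n 1 (2 * (m - t) + 1))
        (σ n (3 + 2 * j)) (σ n (3 + 2 * (j + 1))) :=
    semiconjBy_asc_mul_asc (by omega) (by omega) (by omega) (by omega) (by omega) (by omega)
  have split_three (t : ℕ) (htm : t < m) : asc n 3 (2 * (m - t) + 2) * asc n 1 (2 * (m - t) + 1) =
      σ n 3 * (asc n 4 (2 * (m - t) + 2) * asc n 1 (2 * (m - t) + 1)) := by
    rw [← mul_assoc, σ_mul_asc (by omega)]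
  rw [← prod_map_range_mul_of_semiconjBy (s := fun j => σ n (3 + 2 * j)) shift_odd]
  exact congrArg List.prod (List.map_congr_left fun t ht => split_three t (List.mem_range.mp ht))

theorem commute_σ_one_prod_σ_odd (n m : ℕ) :
    Commute (σ n 1) ((List.range m).map fun t => σ n (3 + 2 * t)).prod := by
  refine Commute.list_prod_right _ _ fun x hx => ?_
  obtain ⟨t, -, rfl⟩ := List.mem_map.mp hx
  exact commute_σ (by omega)

theorem rho_check_formula'_general {n m : ℕ} (hn : 2 * m + 3 ≤ n) :
    (σ n 1)⁻¹ *
      ((List.range m).map (fun t =>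
        asc n 3 (2 * (m - t) + 2) * asc n 1 (2 * (m - t) + 1))).prod *
      σ n 1 =
    ((List.range m).map (fun t => σ n (3 + 2 * t))).prod *
      ((σ n 1)⁻¹ *
        ((List.range m).map (fun t =>
          asc n 4 (2 * (m - t) + 2) * asc n 1 (2 * (m - t) + 1))).prod *
        σ n 1) := by
  rw [prod_asc_three_mul_asc_one hn, ← mul_assoc,
    (commute_σ_one_prod_σ_odd n m).inv_left.eq]
  simp only [mul_assoc]

/-- Formula (∗), second equality: in `B_{2p+2}` with `p ≥ 5`,
`σ_1⁻¹ (∏_{i=4}^{p-1} (σ_3⋯σ_{2(p-i)+2})(σ_1⋯σ_{2(p-i)+1})) σ_1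
  = (σ_3σ_5σ_7⋯σ_{2p-7}) σ_1⁻¹ (∏_{i=4}^{p-1} (σ_4⋯σ_{2(p-i)+2})(σ_1⋯σ_{2(p-i)+1})) σ_1`,
both products over `i` being taken in increasing order (for `i = p-1` the block
`σ_4⋯σ_{2(p-i)+2}` is the single generator `σ_4`). -/
theorem rho_check_formula' (p : ℕ) (hp : 5 ≤ p) :
    (σ (2 * p + 2) 1)⁻¹ *
      ((List.range (p - 4)).map (fun t =>
        asc (2 * p + 2) 3 (2 * (p - (4 + t)) + 2) *
        asc (2 * p + 2) 1 (2 * (p - (4 + t)) + 1))).prod *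
      σ (2 * p + 2) 1 =
    ((List.range (p - 4)).map (fun t => σ (2 * p + 2) (3 + 2 * t))).prod *
      ((σ (2 * p + 2) 1)⁻¹ *
        ((List.range (p - 4)).map (fun t =>
          asc (2 * p + 2) 4 (2 * (p - (4 + t)) + 2) *
          asc (2 * p + 2) 1 (2 * (p - (4 + t)) + 1))).prod *
        σ (2 * p + 2) 1) := by
  simpa only [Nat.sub_sub] using
    rho_check_formula'_general (n := 2 * p + 2) (m := p - 4) (by omega)
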